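/- arXiv:0902.2039 — 2 statements merged into one kernel-verified Lean document; each statement's English description precedes it below -/
import Mathlib

section
/- Let $A$ be a Dedekind ring whose residue field at every maximal ideal is an algebraic extension of a finite field, and let $m \ge 1$ be an integer. If $T$ is a finite set of closed points of the projective space $\mathbb{P}^m_A$, then there exist an integer $n \ge 1$ and a homogeneous polynomial $f = f(x_0, \ldots, x_m)$ of degree $n$ in the homogeneous coordinates of $\mathbb{P}^m_A$ such that $f$ does not vanish at any point of $T$. -/
open AlgebraicGeometry CategoryTheory TopologicalSpace

noncomputable section

universe u

/-- A field is an algebraic extension of a finite field iff the subring generated by each of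
its elements is finite (this forces positive characteristic and algebraicity over the prime
field). -/
def IsAlgebraicExtensionOfFiniteField (k : Type u) [Field k] : Prop :=
  ∀ x : k, ((Subring.closure {x} : Subring k) : Set k).Finite

attribute [local instance] MvPolynomial.gradedAlgebra

namespace ProjectiveSpectrum

open SetLike

variable {R σ : Type*} [CommRing R] [SetLike σ R] [AddSubmonoidClass σ R]
  {𝒜 : ℕ → σ} [GradedRing 𝒜]

/-- At every point of the projective spectrum some homogeneous element of positive degree does
not vanish. -/
theorem exists_homogeneous_pos_notMem (p : ProjectiveSpectrum 𝒜) :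
    ∃ n : ℕ, 1 ≤ n ∧ ∃ f ∈ 𝒜 n, f ∉ p.asHomogeneousIdeal := by
  classical
  obtain ⟨a, ha, hap⟩ := SetLike.not_le_iff_exists.mp p.not_irrelevant_le
  by_contra! h
  refine hap ?_
  rw [← DirectSum.sum_support_decompose 𝒜 a]
  refine p.asHomogeneousIdeal.toIdeal.sum_mem fun i _ ↦ ?_
  rcases Nat.eq_zero_or_pos i with rfl | hi
  · have h0 : (DirectSum.decompose 𝒜 a 0 : R) = 0 := by
      simpa using ha
    rw [h0]
    exact Ideal.zero_mem _
  · exact h i hi _ (SetLike.coe_mem _)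

/-- If none of finitely many points `q ∈ T` specializes to `p`, then some homogeneous element of
positive degree vanishes on `T` but not at `p`. -/
theorem exists_homogeneous_pos_mem_notMem {T : Set (ProjectiveSpectrum 𝒜)} (hT : T.Finite)
    (p : ProjectiveSpectrum 𝒜) (hp : ∀ q ∈ T, ¬ q ≤ p) :
    ∃ n : ℕ, 1 ≤ n ∧ ∃ f ∈ 𝒜 n,
      (∀ q ∈ T, f ∈ q.asHomogeneousIdeal) ∧ f ∉ p.asHomogeneousIdeal := by
  classical
  induction T, hT using Set.Finite.induction_on with
  | empty =>
    obtain ⟨n, hn, f, hf, hfp⟩ := p.exists_homogeneous_pos_notMem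
    exact ⟨n, hn, f, hf, by simp, hfp⟩
  | @insert q T _ _ ih =>
    obtain ⟨n, hn, f, hf, hfT, hfp⟩ := ih fun q' hq' ↦ hp q' (Set.mem_insert_of_mem _ hq')
    obtain ⟨a, haq, hap⟩ := SetLike.not_le_iff_exists.mp
      (show ¬ q.asHomogeneousIdeal ≤ p.asHomogeneousIdeal from hp q (Set.mem_insert _ _))
    obtain ⟨i, hi⟩ : ∃ i, (DirectSum.decompose 𝒜 a i : R) ∉ p.asHomogeneousIdeal := by
      by_contra! h
      refine hap ?_
      rw [← DirectSum.sum_support_decompose 𝒜 a]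
      exact p.asHomogeneousIdeal.toIdeal.sum_mem fun i _ ↦ h i
    refine ⟨n + i, by lia, f * DirectSum.decompose 𝒜 a i,
      GradedMul.mul_mem hf (SetLike.coe_mem _), ?_, fun h ↦ (p.isPrime.mem_or_mem h).elim hfp hi⟩
    rintro q' (rfl | hq')
    · exact q'.asHomogeneousIdeal.toIdeal.mul_mem_left _ (q'.asHomogeneousIdeal.isHomogeneous i haq)
    · exact q'.asHomogeneousIdeal.toIdeal.mul_mem_right _ (hfT q' hq')

/-- Homogeneous prime avoidance for a finite set of pairwise incomparable points. -/
theorem exists_homogeneous_pos_forall_notMem {T : Set (ProjectiveSpectrum 𝒜)} (hT : T.Finite)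
    (hanti : IsAntichain (· ≤ ·) T) :
    ∃ n : ℕ, 1 ≤ n ∧ ∃ f ∈ 𝒜 n, ∀ p ∈ T, f ∉ p.asHomogeneousIdeal := by
  induction T, hT using Set.Finite.induction_on with
  | empty => exact ⟨1, le_rfl, 0, zero_mem _, by simp⟩
  | @insert p T hpT hT ih =>
    obtain ⟨n, hn, f, hf, hfT⟩ := ih (hanti.subset (Set.subset_insert _ _))
    by_cases hfp : f ∈ p.asHomogeneousIdeal
    · obtain ⟨e, he, g, hg, hgT, hgp⟩ := exists_homogeneous_pos_mem_notMem hT p fun q hq ↦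
        hanti (Set.mem_insert_of_mem _ hq) (Set.mem_insert _ _) (by rintro rfl; exact hpT hq)
      have hfe : f ^ e ∈ 𝒜 (e * n) := by simpa using pow_mem_graded e hf
      have hgn : g ^ n ∈ 𝒜 (e * n) := by simpa [mul_comm] using pow_mem_graded n hg
      refine ⟨e * n, Nat.mul_pos he hn, f ^ e + g ^ n, add_mem hfe hgn, ?_⟩
      rintro q (rfl | hq) h
      · exact hgp (q.isPrime.mem_of_pow_mem n
          ((Ideal.add_mem_iff_right _ (Ideal.pow_mem_of_mem _ hfp e he)).mp h))
      · exact hfT q hq (q.isPrime.mem_of_pow_mem e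
          ((Ideal.add_mem_iff_left _ (Ideal.pow_mem_of_mem _ (hgT q hq) n hn)).mp h))
    · refine ⟨n, hn, f, hf, ?_⟩
      rintro q (rfl | hq)
      exacts [hfp, hfT q hq]

/-- Distinct closed points are incomparable. -/
theorem isAntichain_of_isClosed_singleton {T : Set (ProjectiveSpectrum 𝒜)}
    (hT : ∀ p ∈ T, IsClosed ({p} : Set (ProjectiveSpectrum 𝒜))) :
    IsAntichain (· ≤ ·) T := by
  intro q hq p _ hne hle
  have h := (le_iff_mem_closure 𝒜 q p).mp hle
  rw [(hT q hq).closure_eq] at h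
  exact hne h.symm

end ProjectiveSpectrum

/-- **Lemma 3.5.**  Let `A` be a Dedekind ring whose residue field at every maximal ideal is
an algebraic extension of a finite field, and let `m ≥ 1`.  If `T` is a finite set of closed
points of `ℙ^m_A = Proj A[x_0, …, x_m]`, then there are an integer `n ≥ 1` and a homogeneous
polynomial `F` of degree `n` in the homogeneous coordinates of `ℙ^m_A` which does not vanish
at any point of `T`. -/
theorem exists_homogeneous_not_vanishing_on_closed_points
    (A : Type u) [CommRing A] [IsDomain A] [IsDedekindDomain A]
    (hres : ∀ (q : Ideal A) [q.IsMaximal],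
      letI := Ideal.Quotient.field q
      IsAlgebraicExtensionOfFiniteField (A ⧸ q))
    (m : ℕ) (hm : 1 ≤ m)
    (T : Set (ProjectiveSpectrum (MvPolynomial.homogeneousSubmodule (Fin (m + 1)) A)))
    (hTfin : T.Finite)
    (hTclosed : ∀ p ∈ T,
      IsClosed ({p} : Set (ProjectiveSpectrum (MvPolynomial.homogeneousSubmodule (Fin (m + 1)) A)))) :
    ∃ (n : ℕ), 1 ≤ n ∧
      ∃ F : MvPolynomial (Fin (m + 1)) A,
        F ∈ MvPolynomial.homogeneousSubmodule (Fin (m + 1)) A n ∧ F ≠ 0 ∧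
        ∀ p ∈ T, F ∉ p.asHomogeneousIdeal := by
  rcases T.eq_empty_or_nonempty with rfl | ⟨p, hp⟩
  · exact ⟨1, le_rfl, MvPolynomial.X 0, MvPolynomial.isHomogeneous_X A 0,
      MvPolynomial.X_ne_zero 0, by simp⟩
  · obtain ⟨n, hn, F, hF, hFT⟩ := ProjectiveSpectrum.exists_homogeneous_pos_forall_notMem hTfin
      (ProjectiveSpectrum.isAntichain_of_isClosed_singleton hTclosed)
    exact ⟨n, hn, F, hF, fun h ↦ hFT p hp (h ▸ Ideal.zero_mem _), hFT⟩

end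
end

section
/- Suppose $W = (w_{i,j})_{1 \le i,j \le t}$ is a $t \times t$ square matrix of rational numbers such that every diagonal entry $w_{i,i}$ is negative, every off-diagonal entry $w_{i,j}$ (for $i \ne j$) is positive, and the sum of the entries in each row is $0$. Then there exist positive rational numbers $a_1, \ldots, a_t$ such that $\sum_{i=1}^{t} a_i \, w_{i,j} = 0$ for every $j$ with $1 \le j \le t$; that is, some positive rational linear combination of the rows of $W$ is the zero vector. -/
/-- If the off-diagonal entries of `W` are nonnegative and `v` is a left null vector of `W`, then
the entries of `|v| W` are nonnegative. -/
lemma sum_abs_mul_nonneg_of_vecMul_eq_zero {n K : Type*} [Fintype n]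
    [Field K] [LinearOrder K] [IsStrictOrderedRing K] {W : Matrix n n K} {v : n → K}
    (hoff : ∀ i j, i ≠ j → 0 ≤ W i j) (hv : Matrix.vecMul v W = 0) (j : n) :
    0 ≤ ∑ i, |v i| * W i j := by
  have hvj : ∑ i, v i * W i j = 0 := congrFun hv j
  rcases le_total 0 (v j) with h | h
  · rw [← hvj]
    refine Finset.sum_le_sum fun i _ => ?_
    by_cases hij : i = j
    · rw [hij, abs_of_nonneg h]
    · exact mul_le_mul_of_nonneg_right (le_abs_self _) (hoff i j hij)
  · rw [← neg_zero, ← hvj, ← Finset.sum_neg_distrib]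
    refine Finset.sum_le_sum fun i _ => ?_
    rw [← neg_mul]
    by_cases hij : i = j
    · rw [hij, abs_of_nonpos h]
    · exact mul_le_mul_of_nonneg_right (neg_le_abs _) (hoff i j hij)

/-- **Lemma 5.2.**  If `W` is a `t × t` matrix of rational numbers whose diagonal entries
are negative, whose off-diagonal entries are positive, and each of whose rows sums to `0`,
then some positive rational linear combination of the rows of `W` is the zero vector. -/
theorem exists_positive_combination_of_rows_eq_zero
    (t : ℕ) (ht : 0 < t) (W : Matrix (Fin t) (Fin t) ℚ)
    (hdiag : ∀ i, W i i < 0)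
    (hoff : ∀ i j, i ≠ j → 0 < W i j)
    (hrow : ∀ i, ∑ j, W i j = 0) :
    ∃ a : Fin t → ℚ, (∀ i, 0 < a i) ∧ ∀ j, ∑ i, a i * W i j = 0 := by
  have hdet : W.det = 0 := by
    refine Matrix.exists_mulVec_eq_zero_iff.mp ⟨fun _ => 1, ?_, ?_⟩
    · exact fun h => one_ne_zero (congrFun h ⟨0, ht⟩)
    · ext i
      simpa [Matrix.mulVec, dotProduct] using hrow i
  obtain ⟨v, hv0, hv⟩ := Matrix.exists_vecMul_eq_zero_iff.mpr hdet
  have hnonneg := sum_abs_mul_nonneg_of_vecMul_eq_zero (fun i j h => (hoff i j h).le) hv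
  have htotal : ∑ j, ∑ i, |v i| * W i j = 0 := by
    rw [Finset.sum_comm]
    simp [← Finset.mul_sum, hrow]
  have hzero : ∀ j, ∑ i, |v i| * W i j = 0 := fun j =>
    (Finset.sum_eq_zero_iff_of_nonneg fun j _ => hnonneg j).mp htotal j (Finset.mem_univ j)
  refine ⟨fun i => |v i|, fun j => abs_pos.mpr fun hj => hv0 ?_, hzero⟩
  have hterm : ∀ i ∈ Finset.univ, 0 ≤ |v i| * W i j := fun i _ => by
    by_cases hij : i = j
    · simp [hij, hj]
    · exact mul_nonneg (abs_nonneg _) (hoff i j hij).le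
  ext i
  by_cases hij : i = j
  · rw [hij, hj, Pi.zero_apply]
  · have h := (Finset.sum_eq_zero_iff_of_nonneg hterm).mp (hzero j) i (Finset.mem_univ i)
    exact abs_eq_zero.mp ((mul_eq_zero.mp h).resolve_right (hoff i j hij).ne')
end
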